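/- Let n ≥ 4, n − ⌊n/3⌋ ≤ r ≤ n−1, and let S be a subsemigroup of IORD(n,r). Then S is a maximal subsemigroup of IORD(n,r) if and only if S = IORD(n,r) \ {α} for some α ∈ EI_r ∪ FI_r ∪ GI_r ∪ (∪_{k=2}^{r−1} GI_k^c) ∪ G_n. -/

import Mathlib

/-!
Partial transformations on the chain X_n = {1 < 2 < ... < n}, encoded as
functions `ℕ → Option ℕ` (with `none` meaning "undefined"), composed
left-to-right: `x(αβ) = (xα)β`.
-/

namespace OrientedPT

noncomputable section
open scoped Classical

/-- A partial transformation, as a partial map on `ℕ`. -/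
def PTrans : Type := ℕ → Option ℕ

instance : Mul PTrans := ⟨fun f g x => (f x).bind g⟩

theorem mul_apply (f g : PTrans) (x : ℕ) : (f * g) x = (f x).bind g := rfl

instance : Semigroup PTrans where
  mul_assoc f g h := by
    funext x
    show ((f x).bind g).bind h = (f x).bind (fun y => (g y).bind h)
    cases f x <;> rfl

/-- The domain of a partial transformation. -/
def domSet (f : PTrans) : Set ℕ := {x | f x ≠ none}

/-- The image of a partial transformation. -/
def im (f : PTrans) : Set ℕ := {y | ∃ x, f x = some y}

/-- The set of fixed points: `fix(α) = {x ∈ dom α : xα = x}`. -/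
def fixSet (f : PTrans) : Set ℕ := {x | f x = some x}

/-- The value of `f` at `x` (defaulting to `0` off the domain). -/
def val (f : PTrans) (x : ℕ) : ℕ := (f x).getD 0

/-- `f` is a partial transformation on `X_n = {1,…,n}`. -/
def IsPT (n : ℕ) (f : PTrans) : Prop :=
  domSet f ⊆ Set.Icc 1 n ∧ im f ⊆ Set.Icc 1 n

/-- Order-decreasing: `xα ≤ x` for all `x ∈ dom α`. -/
def OrderDecr (f : PTrans) : Prop := ∀ x y, f x = some y → y ≤ x

/-- Order-preserving. -/
def OrderPres (f : PTrans) : Prop :=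
  ∀ x y u v, f x = some u → f y = some v → x ≤ y → u ≤ v

/-- Order-reversing. -/
def OrderRev (f : PTrans) : Prop :=
  ∀ x y u v, f x = some u → f y = some v → x ≤ y → v ≤ u

/-- Monotone: order-preserving or order-reversing. -/
def IsMonotone (f : PTrans) : Prop := OrderPres f ∨ OrderRev f

/-- Injectivity of a partial transformation. -/
def Inj (f : PTrans) : Prop := ∀ x y z, f x = some z → f y = some z → x = y

/-- The cyclic successor of `a` in the set `D`: the least element of `D`
above `a` if there is one, and otherwise the least element of `D`. -/
def cycSucc (D : Set ℕ) (a : ℕ) : ℕ :=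
  if {x ∈ D | a < x}.Nonempty then sInf {x ∈ D | a < x} else sInf D

/-- The cyclic descents of `f`: those `a ∈ dom f` whose cyclic successor in
`dom f` has a strictly smaller value. Writing `dom f = {x₁ < ⋯ < x_t}` these
are exactly the indices `1 ≤ i ≤ t` with `x_{i+1}α < x_iα` (where `x_{t+1} = x₁`). -/
def descents (f : PTrans) : Set ℕ :=
  {a ∈ domSet f | val f (cycSucc (domSet f) a) < val f a}

/-- The cyclic ascents of `f`. -/
def ascents (f : PTrans) : Set ℕ :=
  {a ∈ domSet f | val f a < val f (cycSucc (domSet f) a)}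

/-- Orientation-preserving: at most one cyclic descent. -/
def OrientPres (f : PTrans) : Prop := (descents f).ncard ≤ 1

/-- Orientation-reversing: at most one cyclic ascent. -/
def OrientRev (f : PTrans) : Prop := (ascents f).ncard ≤ 1

/-- Oriented: orientation-preserving or orientation-reversing. -/
def Oriented (f : PTrans) : Prop := OrientPres f ∨ OrientRev f

/-- `PORD n`: all oriented and order-decreasing partial transformations on `X_n`. -/
def PORD (n : ℕ) : Set PTrans := {f | IsPT n f ∧ Oriented f ∧ OrderDecr f}

/-- `PORD(n,r) = {α ∈ PORD_n : |im α| ≤ r}`. -/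
def PORDr (n r : ℕ) : Set PTrans := {f ∈ PORD n | (im f).ncard ≤ r}

/-- `POPD n`: the orientation-preserving elements of `PORD n`. -/
def POPD (n : ℕ) : Set PTrans := {f ∈ PORD n | OrientPres f}

/-- `PORD_n^* = PORD_n \ POPD_n`. -/
def PORDstar (n : ℕ) : Set PTrans := PORD n \ POPD n

/-- `PMD n`: monotone and order-decreasing partial transformations on `X_n`. -/
def PMD (n : ℕ) : Set PTrans := {f | IsPT n f ∧ IsMonotone f ∧ OrderDecr f}

/-- `PRD_n^* = PORD_n^* \ PMD_n`. -/
def PRDstar (n : ℕ) : Set PTrans := PORDstar n \ PMD n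

/-- `IORD n`: the injective elements of `PORD n`. -/
def IORD (n : ℕ) : Set PTrans := {f ∈ PORD n | Inj f}

/-- `IORD(n,r) = {α ∈ IORD_n : |im α| ≤ r}`. -/
def IORDr (n r : ℕ) : Set PTrans := {f ∈ IORD n | (im f).ncard ≤ r}

/-- `A` is a generating set of `S`: `A ⊆ S` and the smallest subsemigroup
containing `A` is `S`. -/
def IsGenSet (S A : Set PTrans) : Prop :=
  A ⊆ S ∧ (Subsemigroup.closure A : Set PTrans) = S

/-- A minimal generating set: a generating set of minimum cardinality. -/
def IsMinGenSet (S A : Set PTrans) : Prop :=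
  IsGenSet S A ∧ ∀ B : Set PTrans, IsGenSet S B → A.ncard ≤ B.ncard

/-- The rank of `S`: the minimum cardinality of a generating set of `S`. -/
def rank (S : Set PTrans) : ℕ :=
  sInf {k | ∃ A : Set PTrans, IsGenSet S A ∧ A.ncard = k}

/-- `z` is undecomposable in `S`: `z = xy` with `x, y ∈ S` forces `z = x` or `z = y`. -/
def Undecomposable (S : Set PTrans) (z : PTrans) : Prop :=
  ∀ x ∈ S, ∀ y ∈ S, z = x * y → z = x ∨ z = y

/-- `T` is a subsemigroup of (the semigroup given by the subset) `S`. -/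
def IsSubsemigroupOf (T S : Set PTrans) : Prop :=
  T ⊆ S ∧ ∀ a ∈ T, ∀ b ∈ T, a * b ∈ T

/-- `T` is a maximal subsemigroup of `S`: a maximal element, under inclusion,
of the family of proper subsemigroups of `S`. -/
def IsMaximalSubsemigroup (S T : Set PTrans) : Prop :=
  IsSubsemigroupOf T S ∧ T ≠ S ∧
    ∀ U : Set PTrans, IsSubsemigroupOf U S → U ≠ S → T ⊆ U → T = U

/-- The restriction of `f` to `Y`. -/
def restrict (f : PTrans) (Y : Set ℕ) : PTrans :=
  fun x => if x ∈ Y then f x else none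

/-- The partial identity `1_Y` on `Y`. -/
def partialId (Y : Set ℕ) : PTrans := fun x => if x ∈ Y then some x else none

/-- `ξ_{p,q}`: domain `[p, q+1]`, fixes every point of `[p,q]`, maps `q+1` to `p`. -/
def xi (p q : ℕ) : PTrans := fun x =>
  if p ≤ x ∧ x ≤ q then some x else if x = q + 1 then some p else none

/-- `γ_{p,q}` (for `1 ≤ p ≤ q−2 ≤ n−2`): with `k = min(p−1, q−p−1)` and
`l = min(q−p−1, n−q)`, it has domain `[p, p+k] ∪ [q, q+l]` and maps
`p+i ↦ p−i` and `q+j ↦ q−j`. -/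
def gamma (n p q : ℕ) : PTrans := fun x =>
  if p ≤ x ∧ x ≤ p + min (p - 1) (q - p - 1) then some (2 * p - x)
  else if q ≤ x ∧ x ≤ q + min (q - p - 1) (n - q) then some (2 * q - x)
  else none

/-- `γ_{p,q}^{r,s}`: with `u = min(r−s, q−p, n−q+1)`, it has domain
`[p, p+s−1] ∪ [q, q+u−1]` and maps `p+i ↦ p−i` and `q+j ↦ q−j`. -/
def gammaRS (n r p q s : ℕ) : PTrans := fun x =>
  if p ≤ x ∧ x + 1 ≤ p + s then some (2 * p - x)
  else if q ≤ x ∧ x + 1 ≤ q + min (r - s) (min (q - p) (n - q + 1)) then some (2 * q - x)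
  else none

/-- `δ^a_Y`: domain `Y ∪ {a}`, fixes every point of `Y`, maps `a` to `a−1`. -/
def deltaMap (a : ℕ) (Y : Set ℕ) : PTrans :=
  fun x => if x ∈ Y then some x else if x = a then some (a - 1) else none

/-- `ζ_Z`: with `a = max Z` and `b = min Z`, domain `Z ∪ {a+1}`, fixes every
point of `Z`, maps `a+1` to `b−1`. -/
def zetaMap (Z : Set ℕ) : PTrans :=
  fun x => if x ∈ Z then some x else if x = sSup Z + 1 then some (sInf Z - 1) else none

/-- `E_r`: the idempotents of `PORD_n` with image of size exactly `r`. -/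
def Eset (n r : ℕ) : Set PTrans := {f ∈ PORD n | f * f = f ∧ (im f).ncard = r}

/-- `F_r = {ξ_{p,q}^r : 1 ≤ p ≤ n−2, p+1 ≤ q ≤ p+r−2 ≤ n−1}`. -/
def Fset (n r : ℕ) : Set PTrans :=
  {f | ∃ p q : ℕ, 1 ≤ p ∧ p + 2 ≤ n ∧ p + 1 ≤ q ∧ q + 2 ≤ p + r ∧ p + r ≤ n + 1 ∧
    f = xi p q}

/-- `G_n = {γ_{p,q} : 1 ≤ p ≤ q−2 ≤ n−2} \ {γ_{1,n}}`. -/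
def Gset (n : ℕ) : Set PTrans :=
  {f | ∃ p q : ℕ, 1 ≤ p ∧ p + 2 ≤ q ∧ q ≤ n ∧ f = gamma n p q} \ {gamma n 1 n}

/-- `H_n^r = {γ_{p,q}^{r,s} : 1 ≤ p ≤ q−2 ≤ n−2, 1 ≤ s ≤ min{p, q−p, r−1}, (q,s) ≠ (n,1)}`. -/
def Hset (n r : ℕ) : Set PTrans :=
  {f | ∃ p q s : ℕ, 1 ≤ p ∧ p + 2 ≤ q ∧ q ≤ n ∧ 1 ≤ s ∧
    s ≤ min p (min (q - p) (r - 1)) ∧ ¬(q = n ∧ s = 1) ∧ f = gammaRS n r p q s}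

/-- `EI_r = {1_Y : Y ⊆ X_n, |Y| = r}`. -/
def EIset (n r : ℕ) : Set PTrans :=
  {f | ∃ Y : Set ℕ, Y ⊆ Set.Icc 1 n ∧ Y.ncard = r ∧ f = partialId Y}

/-- `FI_r = {δ^a_Y : 2 ≤ a ≤ n, Y ⊆ X_n \ {a−1,a}, |Y| = r−1}`. -/
def FIset (n r : ℕ) : Set PTrans :=
  {f | ∃ (a : ℕ) (Y : Set ℕ), 2 ≤ a ∧ a ≤ n ∧ Y ⊆ Set.Icc 1 n \ {a - 1, a} ∧
    Y.ncard = r - 1 ∧ f = deltaMap a Y}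

/-- `GI_k = {ζ_Z : Z ⊆ X_n \ {1,n}, |Z| = k−1}`. -/
def GIset (n k : ℕ) : Set PTrans :=
  {f | ∃ Z : Set ℕ, Z ⊆ Set.Icc 1 n \ {1, n} ∧ Z.ncard = k - 1 ∧ f = zetaMap Z}

/-- `GI_k^c`: those `ζ_Z ∈ GI_k` with `Z` a convex subset (an interval). -/
def GIcset (n k : ℕ) : Set PTrans :=
  {f | ∃ Z : Set ℕ, Z ⊆ Set.Icc 1 n \ {1, n} ∧ Z.ncard = k - 1 ∧ Z.OrdConnected ∧
    f = zetaMap Z}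

/-- `F^r_{p,q} = {α ∈ PORD(n,r) : α restricted to [p, q+1] equals ξ_{p,q}^r}`. -/
def Frestr (n r p q : ℕ) : Set PTrans :=
  {f ∈ PORDr n r | restrict f (Set.Icc p (q + 1)) = xi p q}

/-- `G_{p,q} = {α ∈ PORD^*(n,r) : α restricted to dom(γ_{p,q}) equals γ_{p,q}}`. -/
def Grestr (n r p q : ℕ) : Set PTrans :=
  {f ∈ PORDr n r ∩ PORDstar n | restrict f (domSet (gamma n p q)) = gamma n p q}

/-- `H^{r,s}_{p,q} = {α ∈ PORD^*(n,r) : α restricted to dom(γ^{r,s}_{p,q}) equals γ^{r,s}_{p,q}}`. -/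
def Hrestr (n r p q s : ℕ) : Set PTrans :=
  {f ∈ PORDr n r ∩ PORDstar n |
    restrict f (domSet (gammaRS n r p q s)) = gammaRS n r p q s}

end

end OrientedPT

/-!
Give a map the sum of `n - (x - xα)` over its domain as weight. A product in `IORD(n, r)` weighs
strictly less than each factor it differs from, so an element of largest weight outside a proper
subsemigroup is undecomposable, and a maximal subsemigroup is the complement of one undecomposable
element. It remains to see which elements these are.

A partial identity on fewer than `r` points is a product of two larger ones. If a moved point of an
undecomposable `α` can be lowered by one, or its value raised by one, without a collision, then `α`
factors through that elementary move and must be some `δ^a_Y`. Otherwise both neighbours are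
occupied. If `α` preserves orientation, the largest point of its domain is then sent below the
least, so the map moving only that point splits off and `α` is some `ζ_Z`; if `α` reverses
orientation, it is glued from two reflections, hence a restriction of some `γ_{p,q}`. Finally
`α = 1_{dom α} β` for every extension `β` of `α`, so that only the largest maps of each kind are
undecomposable.
-/

namespace OrientedPT

attribute [local instance] LinearOrder.toCircularOrder

/-! ### Cyclic descents -/

theorem sbtw_iff_lt {β : Type*} [LinearOrder β] {a b c : β} :
    sbtw a b c ↔ a < b ∧ b < c ∨ b < c ∧ c < a ∨ c < a ∧ a < b :=
  Iff.rfl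

theorem ne_of_sbtw {β : Type*} [CircularPreorder β] {a b c : β} (h : sbtw a b c) :
    a ≠ b ∧ b ≠ c ∧ c ≠ a := by
  refine ⟨?_, ?_, ?_⟩ <;> rintro rfl
  exacts [sbtw_irrefl_left h, sbtw_irrefl_right h, sbtw_irrefl_left_right h]

theorem sbtw_or_sbtw_of_ne {β : Type*} [CircularOrder β] {a b c : β}
    (hab : a ≠ b) (hbc : b ≠ c) (hca : c ≠ a) : sbtw a b c ∨ sbtw c b a := by
  rw [sbtw_iff_not_btw, sbtw_iff_not_btw, ← not_and_or]
  rintro ⟨hcba, habc⟩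
  rcases habc.antisymm hcba with h | h | h
  exacts [hab h, hbc h, hca h]

section CyclicDescent

variable {D : Set ℕ} {a c : ℕ}

theorem cycSucc_of_lt (hc : c ∈ D) (hac : a < c) : IsLeast {x ∈ D | a < x} (cycSucc D a) := by
  have hne : {x ∈ D | a < x}.Nonempty := ⟨c, hc, hac⟩
  rw [cycSucc, if_pos hne]
  exact ⟨Nat.sInf_mem hne, fun _ => Nat.sInf_le⟩

theorem cycSucc_of_forall_le (hne : D.Nonempty) (h : ∀ x ∈ D, x ≤ a) :
    IsLeast D (cycSucc D a) := by
  have hempty : ¬ {x ∈ D | a < x}.Nonempty := fun ⟨x, hx, hax⟩ => (h x hx).not_gt hax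
  rw [cycSucc, if_neg hempty]
  exact ⟨Nat.sInf_mem hne, fun _ => Nat.sInf_le⟩

theorem cycSucc_mem (ha : a ∈ D) : cycSucc D a ∈ D := by
  by_cases h : ∃ c ∈ D, a < c
  · obtain ⟨c, hc, hac⟩ := h
    exact (cycSucc_of_lt hc hac).1.1
  · push Not at h
    exact (cycSucc_of_forall_le ⟨a, ha⟩ h).1

theorem cycSucc_eq_or_sbtw (hc : c ∈ D) (hca : c ≠ a) :
    cycSucc D a = c ∨ sbtw a (cycSucc D a) c := by
  rw [sbtw_iff_lt]
  by_cases h : ∃ x ∈ D, a < x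
  · obtain ⟨x, hx, hax⟩ := h
    have hlt : a < cycSucc D a := (cycSucc_of_lt hx hax).1.2
    rcases hca.lt_or_gt with hca | hac
    · exact Or.inr (Or.inr (Or.inr ⟨hca, hlt⟩))
    · have hle : cycSucc D a ≤ c := (cycSucc_of_lt hx hax).2 ⟨hc, hac⟩
      omega
  · push Not at h
    have hle : cycSucc D a ≤ c := (cycSucc_of_forall_le ⟨c, hc⟩ h).2 hc
    have := h c hc
    omega

variable {β : Type*} [LinearOrder β] {v : ℕ → β} {x y z : ℕ}

theorem exists_descent_of_lt (hx : x ∈ D) (hy : y ∈ D) (hxy : x < y) (hv : v y < v x) :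
    ∃ a ∈ D, v (cycSucc D a) < v a ∧ x ≤ a ∧ a < y := by
  let A : Set ℕ := {a ∈ D | x ≤ a ∧ a < y ∧ v x ≤ v a}
  have hA : A.Finite := (Set.finite_Iio y).subset fun a ha => ha.2.2.1
  obtain ⟨a, ⟨haD, hxa, hay, hva⟩, hmax⟩ := hA.exists_maximal ⟨x, hx, le_rfl, hxy, le_rfl⟩
  obtain ⟨⟨hsD, has⟩, hleast⟩ := cycSucc_of_lt hy hay
  refine ⟨a, haD, ?_, hxa, hay⟩
  rcases (hleast ⟨hy, hay⟩).eq_or_lt with hsy | hsy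
  · exact hsy ▸ hv.trans_le hva
  · by_contra hle
    have := hmax ⟨hsD, hxa.trans has.le, hsy, hva.trans (not_lt.mp hle)⟩ has.le
    exact has.not_ge this

theorem exists_descent_on_arc (hD : D.Finite) (hx : x ∈ D) (hy : y ∈ D) (hv : v y < v x) :
    ∃ a ∈ D, v (cycSucc D a) < v a ∧ (a = x ∨ sbtw x a y) := by
  simp only [sbtw_iff_lt]
  rcases lt_or_gt_of_ne (ne_of_apply_ne v hv.ne') with hxy | hyx
  · obtain ⟨a, ha, hva, hxa, hay⟩ := exists_descent_of_lt hx hy hxy hv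
    exact ⟨a, ha, hva, by omega⟩
  obtain ⟨e, he, hmax⟩ := hD.exists_maximalFor id D ⟨x, hx⟩
  replace hmax : ∀ z ∈ D, z ≤ e := fun z hz => (le_total z e).elim id (hmax hz)
  obtain ⟨hmD, hmin⟩ := cycSucc_of_forall_le ⟨x, hx⟩ hmax
  by_cases hex : v e < v x
  · have hxe : x < e := lt_of_le_of_ne (hmax x hx) (ne_of_apply_ne v hex.ne')
    obtain ⟨a, ha, hva, hxa, -⟩ := exists_descent_of_lt hx he hxe hex
    exact ⟨a, ha, hva, by omega⟩
  by_cases hdesc : v (cycSucc D e) < v e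
  · have := hmax x hx
    exact ⟨e, he, hdesc, by omega⟩
  · have hvm : v y < v (cycSucc D e) := hv.trans_le ((not_lt.mp hex).trans (not_lt.mp hdesc))
    have hmy : cycSucc D e < y := lt_of_le_of_ne (hmin hy) (ne_of_apply_ne v hvm.ne')
    obtain ⟨a, ha, hva, -, hay⟩ := exists_descent_of_lt hmD hy hmy hvm
    exact ⟨a, ha, hva, by omega⟩

theorem lt_of_descent (h : ∀ x ∈ D, ∀ y ∈ D, ∀ z ∈ D, sbtw x y z → sbtw (v x) (v y) (v z))
    (ha : a ∈ D) (hva : v (cycSucc D a) < v a) (hc : c ∈ D) (hca : c ≠ a) : v c < v a := by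
  rcases cycSucc_eq_or_sbtw hc hca with hs | hs
  · exact hs ▸ hva
  · rcases sbtw_iff_lt.mp (h a ha _ (cycSucc_mem ha) c hc hs) with h | h | h
    exacts [absurd h.1 hva.not_gt, h.2, h.1]

/-- Two falls of `v` along a cyclically ordered triple happen on disjoint arcs, so they produce two
different descents. -/
theorem not_lt_and_lt_of_ncard_descents_le_one (hD : D.Finite)
    (h : {a ∈ D | v (cycSucc D a) < v a}.ncard ≤ 1) (hx : x ∈ D) (hy : y ∈ D) (hz : z ∈ D)
    (hxyz : sbtw x y z) : ¬ (v z < v y ∧ v y < v x) := by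
  rintro ⟨hzy, hyx⟩
  obtain ⟨a, ha, hva, hxa⟩ := exists_descent_on_arc hD hx hy hyx
  obtain ⟨b, hb, hvb, hyb⟩ := exists_descent_on_arc hD hy hz hzy
  have hab := (Set.ncard_le_one (hD.subset (Set.sep_subset _ _))).mp h a ⟨ha, hva⟩ b ⟨hb, hvb⟩
  simp only [sbtw_iff_lt] at hxa hyb hxyz
  omega

theorem ncard_descents_le_one_iff (hD : D.Finite) (hv : D.InjOn v) :
    {a ∈ D | v (cycSucc D a) < v a}.ncard ≤ 1 ↔
      ∀ x ∈ D, ∀ y ∈ D, ∀ z ∈ D, sbtw x y z → sbtw (v x) (v y) (v z) := by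
  constructor
  · intro h x hx y hy z hz hxyz
    have hne := ne_of_sbtw hxyz
    refine (sbtw_or_sbtw_of_ne (hv.ne hx hy hne.1) (hv.ne hy hz hne.2.1)
      (hv.ne hz hx hne.2.2)).resolve_right fun hrev => ?_
    rcases sbtw_iff_lt.mp hrev with hfall | hfall | hfall
    · exact not_lt_and_lt_of_ncard_descents_le_one hD h hx hy hz hxyz hfall
    · exact not_lt_and_lt_of_ncard_descents_le_one hD h hz hx hy hxyz.cyclic_right hfall
    · exact not_lt_and_lt_of_ncard_descents_le_one hD h hy hz hx hxyz.cyclic_left hfall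
  · intro h
    rw [Set.ncard_le_one (hD.subset (Set.sep_subset _ _))]
    rintro a ⟨ha, hva⟩ b ⟨hb, hvb⟩
    by_contra hab
    exact lt_asymm (lt_of_descent h ha hva hb (Ne.symm hab)) (lt_of_descent h hb hvb ha hab)

end CyclicDescent

/-! ### Orientation through cyclic triples -/

/-- `f` sends triples of points of its domain related by `R` to triples related by `R'`. -/
def MapsTriples (R R' : ℕ → ℕ → ℕ → Prop) (f : PTrans) : Prop :=
  ∀ ⦃x y z u v w⦄, f x = some u → f y = some v → f z = some w → R x y z → R' u v w

/-- `f` preserves the strict cyclic order of `ℕ`; for injective maps with finite domain this is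
`OrientPres`. -/
def PreservesCyc (f : PTrans) : Prop := MapsTriples sbtw sbtw f

/-- `f` reverses the strict cyclic order of `ℕ`; for injective maps with finite domain this is
`OrientRev`. -/
def ReversesCyc (f : PTrans) : Prop := MapsTriples sbtw (fun u v w => sbtw w v u) f

/-- `f` is an order-decreasing partial transformation on `X_n`. -/
def DecrOn (n : ℕ) (f : PTrans) : Prop := ∀ ⦃x y⦄, f x = some y → 1 ≤ y ∧ y ≤ x ∧ x ≤ n

variable {n r : ℕ} {f g : PTrans}

theorem mem_domSet {x : ℕ} : x ∈ domSet f ↔ ∃ y, f x = some y := Option.ne_none_iff_exists'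

theorem mem_domSet_of_eq_some {x y : ℕ} (h : f x = some y) : x ∈ domSet f :=
  mem_domSet.mpr ⟨y, h⟩

theorem val_of_eq_some {x y : ℕ} (h : f x = some y) : val f x = y := by
  rw [val, h, Option.getD_some]

theorem eq_some_val {x : ℕ} (hx : x ∈ domSet f) : f x = some (val f x) := by
  obtain ⟨y, hy⟩ := mem_domSet.mp hx
  rw [hy, val_of_eq_some hy]

theorem decrOn_iff : DecrOn n f ↔ IsPT n f ∧ OrderDecr f := by
  refine ⟨fun h => ⟨⟨fun x hx => ?_, ?_⟩, fun x y hxy => (h hxy).2.1⟩, ?_⟩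
  · have := h (eq_some_val hx)
    exact ⟨this.1.trans this.2.1, this.2.2⟩
  · rintro y ⟨x, hxy⟩
    have := h hxy
    exact ⟨this.1, this.2.1.trans this.2.2⟩
  · rintro ⟨⟨hdom, him⟩, hdecr⟩ x y hxy
    exact ⟨(him ⟨x, hxy⟩).1, hdecr x y hxy, (hdom (mem_domSet_of_eq_some hxy)).2⟩

theorem DecrOn.domSet_subset (h : DecrOn n f) : domSet f ⊆ Set.Icc 1 n := (decrOn_iff.mp h).1.1

theorem DecrOn.im_subset (h : DecrOn n f) : im f ⊆ Set.Icc 1 n := (decrOn_iff.mp h).1.2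

theorem DecrOn.finite_domSet (h : DecrOn n f) : (domSet f).Finite :=
  (Set.finite_Icc 1 n).subset h.domSet_subset

theorem DecrOn.finite_im (h : DecrOn n f) : (im f).Finite :=
  (Set.finite_Icc 1 n).subset h.im_subset

theorem Inj.injOn_val (h : Inj f) : (domSet f).InjOn (val f) := fun x hx y hy hxy =>
  h x y (val f x) (eq_some_val hx) (hxy ▸ eq_some_val hy)

theorem val_image_domSet : val f '' domSet f = im f := by
  ext y
  constructor
  · rintro ⟨x, hx, rfl⟩
    exact ⟨x, eq_some_val hx⟩
  · rintro ⟨x, hxy⟩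
    exact ⟨x, mem_domSet_of_eq_some hxy, val_of_eq_some hxy⟩

theorem Inj.ncard_im (h : Inj f) : (im f).ncard = (domSet f).ncard := by
  rw [← val_image_domSet, h.injOn_val.ncard_image]

theorem mapsTriples_iff_val {R R' : ℕ → ℕ → ℕ → Prop} :
    MapsTriples R R' f ↔ ∀ x ∈ domSet f, ∀ y ∈ domSet f, ∀ z ∈ domSet f,
      R x y z → R' (val f x) (val f y) (val f z) := by
  constructor
  · intro h x hx y hy z hz
    exact h (eq_some_val hx) (eq_some_val hy) (eq_some_val hz)
  · intro h x y z u v w hx hy hz hxyz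
    rw [← val_of_eq_some hx, ← val_of_eq_some hy, ← val_of_eq_some hz]
    exact h x (mem_domSet_of_eq_some hx) y (mem_domSet_of_eq_some hy) z
      (mem_domSet_of_eq_some hz) hxyz

theorem orientPres_iff (hfin : (domSet f).Finite) (hf : Inj f) :
    OrientPres f ↔ PreservesCyc f :=
  (ncard_descents_le_one_iff hfin hf.injOn_val).trans mapsTriples_iff_val.symm

theorem orientRev_iff (hfin : (domSet f).Finite) (hf : Inj f) :
    OrientRev f ↔ ReversesCyc f := by
  have hinj : (domSet f).InjOn (OrderDual.toDual ∘ val f) := hf.injOn_val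
  refine (ncard_descents_le_one_iff hfin hinj).trans (Iff.trans ?_ mapsTriples_iff_val.symm)
  simp only [sbtw_iff_lt, Function.comp_apply, OrderDual.toDual_lt_toDual]
  refine forall₄_congr fun x _ y _ => forall₂_congr fun z _ => imp_congr_right fun _ => ?_
  omega

theorem mem_IORDr_iff :
    f ∈ IORDr n r ↔
      DecrOn n f ∧ Inj f ∧ (PreservesCyc f ∨ ReversesCyc f) ∧ (im f).ncard ≤ r := by
  constructor
  · rintro ⟨⟨⟨hpt, hor, hdecr⟩, hinj⟩, hcard⟩
    have hd : DecrOn n f := decrOn_iff.mpr ⟨hpt, hdecr⟩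
    rw [Oriented, orientPres_iff hd.finite_domSet hinj, orientRev_iff hd.finite_domSet hinj] at hor
    exact ⟨hd, hinj, hor, hcard⟩
  · rintro ⟨hd, hinj, hor, hcard⟩
    rw [← orientPres_iff hd.finite_domSet hinj, ← orientRev_iff hd.finite_domSet hinj] at hor
    obtain ⟨hpt, hdecr⟩ := decrOn_iff.mp hd
    exact ⟨⟨⟨hpt, hor, hdecr⟩, hinj⟩, hcard⟩

theorem PreservesCyc.of_inverse (hf : PreservesCyc f)
    (hgf : ∀ x y, g x = some y → f y = some x) : PreservesCyc g := by
  intro x y z u v w hx hy hz hxyz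
  have hinj : ∀ {s t p q : ℕ}, g s = some p → g t = some q → s ≠ t → p ≠ q := by
    rintro s t p q hs ht hst rfl
    exact hst (Option.some_injective _ ((hgf s p hs).symm.trans (hgf t p ht)))
  obtain ⟨hxy, hyz, hzx⟩ := ne_of_sbtw hxyz
  refine (sbtw_or_sbtw_of_ne (hinj hx hy hxy) (hinj hy hz hyz) (hinj hz hx hzx)).resolve_right ?_
  intro hwvu
  exact hxyz.not_sbtw (hf (hgf z w hz) (hgf y v hy) (hgf x u hx) hwvu)

theorem preservesCyc_of_domSet_subset_pair {p q : ℕ} (h : domSet f ⊆ {p, q}) :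
    PreservesCyc f := by
  intro x y z u v w hx hy hz hxyz
  have hx := h (mem_domSet_of_eq_some hx)
  have hy := h (mem_domSet_of_eq_some hy)
  have hz := h (mem_domSet_of_eq_some hz)
  have hne := ne_of_sbtw hxyz
  simp only [Set.mem_insert_iff, Set.mem_singleton_iff] at hx hy hz
  omega

/-! ### Products -/

theorem mul_eq_some {x z : ℕ} : (f * g) x = some z ↔ ∃ y, f x = some y ∧ g y = some z :=
  Option.bind_eq_some_iff

theorem domSet_mul_subset : domSet (f * g) ⊆ domSet f := fun x hx => by
  obtain ⟨z, hz⟩ := mem_domSet.mp hx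
  obtain ⟨y, hxy, -⟩ := mul_eq_some.mp hz
  exact mem_domSet_of_eq_some hxy

theorem im_mul_subset : im (f * g) ⊆ im g := by
  rintro z ⟨x, hx⟩
  obtain ⟨y, -, hyz⟩ := mul_eq_some.mp hx
  exact ⟨y, hyz⟩

theorem Inj.mul (hf : Inj f) (hg : Inj g) : Inj (f * g) := by
  intro x y z hx hy
  obtain ⟨x', hx, hx'⟩ := mul_eq_some.mp hx
  obtain ⟨y', hy, hy'⟩ := mul_eq_some.mp hy
  obtain rfl := hg x' y' z hx' hy'
  exact hf x y x' hx hy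

theorem DecrOn.mul (hf : DecrOn n f) (hg : DecrOn n g) : DecrOn n (f * g) := by
  intro x z hxz
  obtain ⟨y, hxy, hyz⟩ := mul_eq_some.mp hxz
  exact ⟨(hg hyz).1, (hg hyz).2.1.trans (hf hxy).2.1, (hf hxy).2.2⟩

theorem MapsTriples.mul {R R' R'' : ℕ → ℕ → ℕ → Prop} (hf : MapsTriples R R' f)
    (hg : MapsTriples R' R'' g) : MapsTriples R R'' (f * g) := by
  intro x y z u v w hx hy hz hxyz
  obtain ⟨x', hx, hx'⟩ := mul_eq_some.mp hx
  obtain ⟨y', hy, hy'⟩ := mul_eq_some.mp hy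
  obtain ⟨z', hz, hz'⟩ := mul_eq_some.mp hz
  exact hg hx' hy' hz' (hf hx hy hz hxyz)

theorem MapsTriples.swap {R R' : ℕ → ℕ → ℕ → Prop} (hf : MapsTriples R R' f) :
    MapsTriples (fun x y z => R z y x) (fun u v w => R' w v u) f :=
  fun _ _ _ _ _ _ hx hy hz hzyx => hf hz hy hx hzyx

theorem preservesCyc_or_reversesCyc_mul (hf : PreservesCyc f ∨ ReversesCyc f)
    (hg : PreservesCyc g ∨ ReversesCyc g) : PreservesCyc (f * g) ∨ ReversesCyc (f * g) := by
  rcases hf with hf | hf <;> rcases hg with hg | hg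
  · exact Or.inl (MapsTriples.mul hf hg)
  · exact Or.inr (MapsTriples.mul hf hg)
  · exact Or.inr (MapsTriples.mul hf (MapsTriples.swap hg))
  · exact Or.inl (MapsTriples.mul hf (MapsTriples.swap hg))

theorem mul_mem_IORDr (hf : f ∈ IORDr n r) (hg : g ∈ IORDr n r) : f * g ∈ IORDr n r := by
  obtain ⟨hfd, hfi, hfc, -⟩ := mem_IORDr_iff.mp hf
  obtain ⟨hgd, hgi, hgc, hgr⟩ := mem_IORDr_iff.mp hg
  exact mem_IORDr_iff.mpr ⟨hfd.mul hgd, hfi.mul hgi, preservesCyc_or_reversesCyc_mul hfc hgc,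
    (Set.ncard_le_ncard im_mul_subset hgd.finite_im).trans hgr⟩

/-! ### Maximal subsemigroups -/

theorem sum_lt_sum_of_injOn {ι M : Type*} [AddCommMonoid M] [PartialOrder M]
    [IsOrderedCancelAddMonoid M] {s t : Finset ι} {c : ι → M} {φ : ι → ι} (hst : s ≠ t)
    (hmaps : ∀ p ∈ s, φ p ∈ t) (hinj : Set.InjOn φ s)
    (hlt : ∀ p ∈ s, φ p ≠ p → c p < c (φ p)) (hpos : ∀ q ∈ t, 0 < c q) :
    ∑ p ∈ s, c p < ∑ q ∈ t, c q := by
  classical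
  by_cases hfix : ∀ p ∈ s, φ p = p
  · have hsub : s ⊆ t := fun p hp => hfix p hp ▸ hmaps p hp
    obtain ⟨q, hqt, hqs⟩ := Finset.exists_of_ssubset (hsub.ssubset_of_ne hst)
    exact Finset.sum_lt_sum_of_subset hsub hqt hqs (hpos q hqt) fun x hx _ => (hpos x hx).le
  · push Not at hfix
    obtain ⟨p, hp, hne⟩ := hfix
    calc ∑ p ∈ s, c p < ∑ p ∈ s, c (φ p) :=
        Finset.sum_lt_sum (fun x hx => (eq_or_ne (φ x) x).elim (fun h => (congrArg c h).ge)
          fun h => (hlt x hx h).le) ⟨p, hp, hlt p hp hne⟩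
      _ = ∑ q ∈ s.image φ, c q := (Finset.sum_image hinj).symm
      _ ≤ ∑ q ∈ t, c q := Finset.sum_le_sum_of_subset_of_nonneg
        (Finset.image_subset_iff.mpr hmaps) fun q hq _ => (hpos q hq).le

open Classical in
/-- The graph of `f`, cut down to `X_n × X_n`. -/
noncomputable def graph (n : ℕ) (f : PTrans) : Finset (ℕ × ℕ) :=
  {p ∈ Finset.Icc 1 n ×ˢ Finset.Icc 1 n | f p.1 = some p.2}

/-- The sum of `n - (x - xα)` over the domain of `α`, which grows with the domain and shrinks as
points are moved further down. The summand is written without truncation when `xα ≤ x ≤ n`. -/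
noncomputable def weight (n : ℕ) (f : PTrans) : ℕ := ∑ p ∈ graph n f, (n + p.2 - p.1)

theorem DecrOn.mem_graph (hf : DecrOn n f) {p : ℕ × ℕ} : p ∈ graph n f ↔ f p.1 = some p.2 := by
  simp only [graph, Finset.mem_filter, Finset.mem_product, Finset.mem_Icc, and_iff_right_iff_imp]
  intro hp
  have := hf hp
  omega

theorem DecrOn.graph_ne (hf : DecrOn n f) (hg : DecrOn n g) (hfg : f ≠ g) :
    graph n f ≠ graph n g := by
  contrapose! hfg
  funext x
  ext y
  rw [← hf.mem_graph (p := (x, y)), hfg, hg.mem_graph]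

theorem DecrOn.weight_summand_pos (hf : DecrOn n f) {p : ℕ × ℕ} (hp : p ∈ graph n f) :
    0 < n + p.2 - p.1 := by
  have := hf (hf.mem_graph.mp hp)
  omega

theorem DecrOn.of_mem_graph_mul (hfg : DecrOn n (f * g)) {p : ℕ × ℕ}
    (hp : p ∈ graph n (f * g)) : f p.1 = some (val f p.1) ∧ g (val f p.1) = some p.2 := by
  obtain ⟨y, hpy, hyp⟩ := mul_eq_some.mp (hfg.mem_graph.mp hp)
  rw [val_of_eq_some hpy]
  exact ⟨hpy, hyp⟩

theorem weight_mul_lt_left (hf : DecrOn n f) (hg : DecrOn n g) (hne : f * g ≠ f) :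
    weight n (f * g) < weight n f := by
  have hfg := hf.mul hg
  refine sum_lt_sum_of_injOn (φ := fun p => (p.1, val f p.1)) (hfg.graph_ne hf hne)
    (fun p hp => hf.mem_graph.mpr (hfg.of_mem_graph_mul hp).1) ?_ ?_
    fun _ => hf.weight_summand_pos
  · rintro ⟨x, z⟩ hp ⟨x', z'⟩ hp' heq
    obtain rfl : x = x' := (Prod.ext_iff.mp heq).1
    have hxz : (f * g) x = some z := hfg.mem_graph.mp hp
    have hxz' : (f * g) x = some z' := hfg.mem_graph.mp hp'
    exact Prod.ext rfl (Option.some_injective _ (hxz.symm.trans hxz'))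
  · rintro ⟨x, z⟩ hp hmoved
    obtain ⟨hxy, hyz⟩ := hfg.of_mem_graph_mul hp
    have hle := hg hyz
    have hne : val f x ≠ z := fun h => hmoved (Prod.ext rfl h)
    have := hf hxy
    dsimp only at *
    omega

theorem weight_mul_lt_right (hf : DecrOn n f) (hfi : Inj f) (hg : DecrOn n g)
    (hne : f * g ≠ g) : weight n (f * g) < weight n g := by
  have hfg := hf.mul hg
  refine sum_lt_sum_of_injOn (φ := fun p => (val f p.1, p.2)) (hfg.graph_ne hg hne)
    (fun p hp => hg.mem_graph.mpr (hfg.of_mem_graph_mul hp).2) ?_ ?_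
    fun _ => hg.weight_summand_pos
  · rintro ⟨x, z⟩ hp ⟨x', z'⟩ hp' heq
    obtain ⟨hval, rfl⟩ : val f x = val f x' ∧ z = z' := Prod.ext_iff.mp heq
    have hx : f x = some (val f x') := hval ▸ (hfg.of_mem_graph_mul hp).1
    exact Prod.ext (hfi x x' _ hx (hfg.of_mem_graph_mul hp').1) rfl
  · rintro ⟨x, z⟩ hp hmoved
    obtain ⟨hxy, hyz⟩ := hfg.of_mem_graph_mul hp
    have hle := hg hyz
    have hne : val f x ≠ x := fun h => hmoved (Prod.ext h rfl)
    have := hf hxy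
    dsimp only at *
    omega

theorem weight_le (n : ℕ) (f : PTrans) :
    weight n f ≤ ∑ p ∈ Finset.Icc 1 n ×ˢ Finset.Icc 1 n, (n + p.2 - p.1) :=
  Finset.sum_le_sum_of_subset (Finset.filter_subset _ _)

section Undecomposable

variable {T S : Set PTrans} {α : PTrans}

theorem Undecomposable.isSubsemigroupOf_sdiff (hT : ∀ a ∈ T, ∀ b ∈ T, a * b ∈ T)
    (hα : Undecomposable T α) : IsSubsemigroupOf (T \ {α}) T := by
  refine ⟨Set.sdiff_subset, fun a ha b hb => ⟨hT a ha.1 b hb.1, fun hab => ?_⟩⟩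
  rcases hα a ha.1 b hb.1 hab.symm with rfl | rfl
  exacts [ha.2 rfl, hb.2 rfl]

/-- The witness is an element of `T \ S` of largest weight. -/
theorem IsSubsemigroupOf.exists_undecomposable (hS : IsSubsemigroupOf S T) (hne : S ≠ T)
    (w : PTrans → ℕ) (hbdd : BddAbove (w '' T))
    (hleft : ∀ a ∈ T, ∀ b ∈ T, a * b ≠ a → w (a * b) < w a)
    (hright : ∀ a ∈ T, ∀ b ∈ T, a * b ≠ b → w (a * b) < w b) :
    ∃ α ∈ T \ S, Undecomposable T α := by
  have hdiff : (T \ S).Nonempty :=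
    Set.nonempty_of_not_subset fun h => hne (hS.1.antisymm h)
  obtain ⟨α, hα, hmax⟩ : ∃ α ∈ T \ S, ∀ β ∈ T \ S, w β ≤ w α := by
    have hne' : (w '' (T \ S)).Nonempty := hdiff.image w
    have hbdd' : BddAbove (w '' (T \ S)) := hbdd.mono (Set.image_mono Set.sdiff_subset)
    obtain ⟨α, hα, hsup⟩ := Nat.sSup_mem hne' hbdd'
    exact ⟨α, hα, fun β hβ => hsup ▸ le_csSup hbdd' ⟨β, hβ, rfl⟩⟩
  refine ⟨α, hα, fun a ha b hb hab => ?_⟩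
  by_contra! hcon
  subst hab
  by_cases haS : a ∈ S
  · by_cases hbS : b ∈ S
    · exact hα.2 (hS.2 a haS b hbS)
    · exact (hmax b ⟨hb, hbS⟩).not_gt (hright a ha b hb hcon.2)
  · exact (hmax a ⟨ha, haS⟩).not_gt (hleft a ha b hb hcon.1)

theorem IsMaximalSubsemigroup.eq_sdiff_singleton (hS : IsMaximalSubsemigroup T S)
    (hT : ∀ a ∈ T, ∀ b ∈ T, a * b ∈ T) (hα : α ∈ T \ S) (hund : Undecomposable T α) :
    S = T \ {α} :=
  hS.2.2 _ (hund.isSubsemigroupOf_sdiff hT) (fun h => (h.symm ▸ hα.1 : α ∈ T \ {α}).2 rfl)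
    (Set.subset_sdiff_singleton hS.1.1 hα.2)

theorem isMaximalSubsemigroup_sdiff_singleton (hα : α ∈ T)
    (hS : IsSubsemigroupOf (T \ {α}) T) : IsMaximalSubsemigroup T (T \ {α}) := by
  refine ⟨hS, fun h => (h.symm ▸ hα : α ∈ T \ {α}).2 rfl, fun U hU hne hsub => ?_⟩
  refine hsub.antisymm (Set.subset_sdiff_singleton hU.1 fun hαU => hne (hU.1.antisymm ?_))
  rw [← Set.insert_sdiff_self_of_mem hα]
  exact Set.insert_subset hαU hsub

theorem exists_undecomposable_of_isMaximalSubsemigroup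
    (hS : IsMaximalSubsemigroup (IORDr n r) S) :
    ∃ α ∈ IORDr n r, Undecomposable (IORDr n r) α ∧ S = IORDr n r \ {α} := by
  have hdecr : ∀ a ∈ IORDr n r, DecrOn n a := fun a ha => (mem_IORDr_iff.mp ha).1
  have hinj : ∀ a ∈ IORDr n r, Inj a := fun a ha => (mem_IORDr_iff.mp ha).2.1
  obtain ⟨α, hα, hund⟩ := hS.1.exists_undecomposable hS.2.1 (weight n)
    ⟨_, Set.forall_mem_image.mpr fun f _ => weight_le n f⟩
    (fun a ha b hb => weight_mul_lt_left (hdecr a ha) (hdecr b hb))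
    (fun a ha b hb => weight_mul_lt_right (hdecr a ha) (hinj a ha) (hdecr b hb))
  exact ⟨α, hα.1, hund,
    hS.eq_sdiff_singleton (fun a ha b hb => mul_mem_IORDr ha hb) hα hund⟩

end Undecomposable

/-! ### The distinguished maps -/

section PartialId

variable {Y Z : Set ℕ}

theorem partialId_eq_some {x y : ℕ} : partialId Y x = some y ↔ x ∈ Y ∧ x = y := by
  rw [partialId]
  split_ifs with hx <;> simp [hx]

theorem domSet_partialId : domSet (partialId Y) = Y := by
  ext x
  simp [mem_domSet, partialId_eq_some]

theorem im_partialId : im (partialId Y) = Y := by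
  ext y
  simp [im, partialId_eq_some]

theorem eq_partialId_domSet (hfix : ∀ ⦃x y⦄, f x = some y → x = y) : f = partialId (domSet f) := by
  funext x
  ext y
  rw [partialId_eq_some]
  refine ⟨fun hxy => ⟨mem_domSet_of_eq_some hxy, hfix hxy⟩, ?_⟩
  rintro ⟨hx, rfl⟩
  have hval := eq_some_val hx
  rwa [← hfix hval] at hval

theorem partialId_domSet_mul_of_extends (hg : ∀ ⦃x y⦄, f x = some y → g x = some y) :
    partialId (domSet f) * g = f := by
  funext x
  ext z
  simp only [mul_eq_some, partialId_eq_some]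
  constructor
  · rintro ⟨_, ⟨hx, rfl⟩, hz⟩
    have hval := eq_some_val hx
    rwa [hg hval, ← hval] at hz
  · intro hxz
    exact ⟨x, ⟨mem_domSet_of_eq_some hxz, rfl⟩, hg hxz⟩

theorem mul_partialId_im : f * partialId (im f) = f := by
  funext x
  ext z
  simp only [mul_eq_some, partialId_eq_some]
  constructor
  · rintro ⟨_, hxz, -, rfl⟩
    exact hxz
  · intro hxz
    exact ⟨z, hxz, ⟨x, hxz⟩, rfl⟩

theorem partialId_mul_partialId : partialId Y * partialId Z = partialId (Y ∩ Z) := by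
  funext x
  ext z
  simp only [mul_eq_some, partialId_eq_some, Set.mem_inter_iff]
  grind

theorem preservesCyc_partialId : PreservesCyc (partialId Y) := by
  intro x y z u v w hx hy hz hxyz
  obtain ⟨-, rfl⟩ := partialId_eq_some.mp hx
  obtain ⟨-, rfl⟩ := partialId_eq_some.mp hy
  obtain ⟨-, rfl⟩ := partialId_eq_some.mp hz
  exact hxyz

theorem partialId_mem_IORDr (hY : Y ⊆ Set.Icc 1 n) (hcard : Y.ncard ≤ r) :
    partialId Y ∈ IORDr n r := by
  refine mem_IORDr_iff.mpr ⟨?_, ?_, Or.inl preservesCyc_partialId, im_partialId.symm ▸ hcard⟩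
  · intro x y hxy
    obtain ⟨hx, rfl⟩ := partialId_eq_some.mp hxy
    exact ⟨(hY hx).1, le_rfl, (hY hx).2⟩
  · intro x y z hx hy
    exact (partialId_eq_some.mp hx).2.trans (partialId_eq_some.mp hy).2.symm

end PartialId

section MoveMap

variable {Z : Set ℕ} {a b : ℕ}

open Classical in
/-- The partial map fixing every point of `Z` and sending `a` to `b`, the common form of
`δ^a_Y` and `ζ_Z`. -/
noncomputable def moveMap (Z : Set ℕ) (a b : ℕ) : PTrans :=
  fun x => if x ∈ Z then some x else if x = a then some b else none

theorem deltaMap_eq_moveMap : deltaMap a Z = moveMap Z a (a - 1) := rfl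

theorem zetaMap_eq_moveMap : zetaMap Z = moveMap Z (sSup Z + 1) (sInf Z - 1) := rfl

theorem moveMap_eq_some {x y : ℕ} :
    moveMap Z a b x = some y ↔ x ∈ Z ∧ x = y ∨ x ∉ Z ∧ x = a ∧ b = y := by
  rw [moveMap]
  split_ifs with hx <;> grind

theorem domSet_moveMap : domSet (moveMap Z a b) = insert a Z := by
  ext x
  by_cases hx : x ∈ Z <;> simp [mem_domSet, moveMap_eq_some, hx]

theorem inj_moveMap (hb : b ∉ Z) : Inj (moveMap Z a b) := by
  intro x y z hx hy
  rw [moveMap_eq_some] at hx hy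
  rcases hx with ⟨hx, rfl⟩ | ⟨-, rfl, rfl⟩ <;> rcases hy with ⟨hy, rfl⟩ | ⟨-, rfl, hby⟩
  · rfl
  · exact absurd (hby ▸ hx) hb
  · exact absurd hy hb
  · rfl

theorem moveMap_symm_apply (ha : a ∉ Z) (hb : b ∉ Z) {x y : ℕ} :
    moveMap Z a b x = some y ↔ moveMap Z b a y = some x := by
  simp only [moveMap_eq_some]
  grind

theorem moveMap_mul_moveMap_symm (ha : a ∉ Z) (hb : b ∉ Z) :
    moveMap Z a b * moveMap Z b a = partialId (insert a Z) := by
  funext x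
  ext z
  simp only [mul_eq_some, moveMap_eq_some, partialId_eq_some, Set.mem_insert_iff]
  grind

theorem preservesCyc_moveMap (hb : b ∉ Z) (harc : ∀ z ∈ Z, ¬ sbtw a z b) :
    PreservesCyc (moveMap Z a b) := by
  have hbZ : ∀ z ∈ Z, z ≠ b := fun z hz h => hb (h ▸ hz)
  intro x y z u v w hx hy hz hxyz
  rw [moveMap_eq_some] at hx hy hz
  simp only [sbtw_iff_lt] at *
  rcases hx with ⟨hx, rfl⟩ | ⟨-, rfl, rfl⟩ <;> rcases hy with ⟨hy, rfl⟩ | ⟨-, rfl, hby⟩ <;>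
    rcases hz with ⟨hz, rfl⟩ | ⟨-, rfl, hbz⟩ <;> grind

theorem PreservesCyc.moveMap_symm (h : PreservesCyc (moveMap Z a b)) (ha : a ∉ Z) (hb : b ∉ Z) :
    PreservesCyc (moveMap Z b a) :=
  h.of_inverse fun _ _ => (moveMap_symm_apply hb ha).mp

theorem preservesCyc_moveMap_pred (ha : a ∉ Z) (hpred : a - 1 ∉ Z) :
    PreservesCyc (moveMap Z a (a - 1)) := by
  refine (preservesCyc_moveMap ha fun z _ => ?_).moveMap_symm hpred ha
  rw [sbtw_iff_lt]
  omega

theorem preservesCyc_moveMap_of_forall_lt (hZb : ∀ z ∈ Z, b < z) (hZa : ∀ z ∈ Z, z < a) :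
    PreservesCyc (moveMap Z a b) := by
  refine preservesCyc_moveMap (fun hb => (hZb b hb).false) fun z hz => ?_
  have := hZb z hz
  have := hZa z hz
  rw [sbtw_iff_lt]
  omega

theorem moveMap_mem_IORDr (hZ : Z ⊆ Set.Icc 1 n) (hb : 1 ≤ b) (hba : b ≤ a) (han : a ≤ n)
    (hbZ : b ∉ Z) (hcyc : PreservesCyc (moveMap Z a b)) (hcard : Z.ncard + 1 ≤ r) :
    moveMap Z a b ∈ IORDr n r := by
  refine mem_IORDr_iff.mpr ⟨?_, inj_moveMap hbZ, Or.inl hcyc, ?_⟩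
  · intro x y hxy
    rcases moveMap_eq_some.mp hxy with ⟨hx, rfl⟩ | ⟨-, rfl, rfl⟩
    · exact ⟨(hZ hx).1, le_rfl, (hZ hx).2⟩
    · exact ⟨hb, hba, han⟩
  · rw [(inj_moveMap hbZ).ncard_im, domSet_moveMap]
    exact (Set.ncard_insert_le a Z).trans hcard

theorem deltaMap_mem_IORDr (ha : 2 ≤ a) (han : a ≤ n) (hZ : Z ⊆ Set.Icc 1 n \ {a - 1, a})
    (hcard : Z.ncard + 1 ≤ r) : deltaMap a Z ∈ IORDr n r := by
  have haZ : a ∉ Z := fun h => (hZ h).2 (Or.inr rfl)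
  have hpred : a - 1 ∉ Z := fun h => (hZ h).2 (Or.inl rfl)
  exact moveMap_mem_IORDr (hZ.trans Set.sdiff_subset) (by omega) (Nat.sub_le a 1) han hpred
    (preservesCyc_moveMap_pred haZ hpred) hcard

theorem zetaMap_mem_IORDr (hZ : Z ⊆ Set.Icc 1 n \ {1, n}) (hne : Z.Nonempty)
    (hcard : Z.ncard + 1 ≤ r) : zetaMap Z ∈ IORDr n r := by
  have hZn : Z ⊆ Set.Icc 1 n := hZ.trans Set.sdiff_subset
  have hbdd : BddAbove Z := bddAbove_Icc.mono hZn
  obtain ⟨⟨hb1, -⟩, hb⟩ := hZ (Nat.sInf_mem hne)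
  obtain ⟨⟨ha1, han⟩, ha⟩ := hZ (Nat.sSup_mem hne hbdd)
  rw [Set.mem_insert_iff, Set.mem_singleton_iff] at ha hb
  have hle : sInf Z ≤ sSup Z := Nat.sInf_le (Nat.sSup_mem hne hbdd)
  have hbZ : ∀ z ∈ Z, sInf Z - 1 < z := fun z hz => by
    have := Nat.sInf_le hz
    omega
  exact moveMap_mem_IORDr hZn (by omega) (by omega) (by omega) (fun h => (hbZ _ h).false)
    (preservesCyc_moveMap_of_forall_lt hbZ fun z hz => Nat.lt_succ_of_le (le_csSup hbdd hz)) hcard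

end MoveMap

section Gamma

variable {p q : ℕ}

theorem gamma_eq_some (hpq : p < q) {x y : ℕ} :
    gamma n p q x = some y ↔
      x ∈ Finset.Icc p (p + min (p - 1) (q - p - 1)) ∧ y = 2 * p - x ∨
        x ∈ Finset.Icc q (q + min (q - p - 1) (n - q)) ∧ y = 2 * q - x := by
  rw [gamma]
  split_ifs <;> grind

theorem ncard_domSet_gamma_le (hpq : p < q) :
    (domSet (gamma n p q)).ncard ≤ min (p - 1) (q - p - 1) + min (q - p - 1) (n - q) + 2 := by
  have hsub : domSet (gamma n p q) ⊆ (Finset.Icc p (p + min (p - 1) (q - p - 1)) ∪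
      Finset.Icc q (q + min (q - p - 1) (n - q)) : Finset ℕ) := by
    intro x hx
    rw [Finset.mem_coe, Finset.mem_union]
    exact ((gamma_eq_some hpq).mp (eq_some_val hx)).imp And.left And.left
  have hcard := (Set.ncard_le_ncard hsub (Finset.finite_toSet _)).trans_eq (Set.ncard_coe_finset _)
  have hunion := hcard.trans (Finset.card_union_le _ _)
  rw [Nat.card_Icc, Nat.card_Icc] at hunion
  omega

theorem gamma_mem_IORDr (hr : n - n / 3 ≤ r) (hp : 1 ≤ p) (hpq : p + 2 ≤ q) (hq : q ≤ n) :
    gamma n p q ∈ IORDr n r := by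
  have hlt : p < q := by omega
  have hinj : Inj (gamma n p q) := by
    intro x y z hx hy
    simp only [gamma_eq_some hlt, Finset.mem_Icc] at hx hy
    omega
  refine mem_IORDr_iff.mpr ⟨?_, hinj, Or.inr ?_, ?_⟩
  · intro x y hxy
    simp only [gamma_eq_some hlt, Finset.mem_Icc] at hxy
    omega
  · intro x y z u v w hx hy hz hxyz
    simp only [gamma_eq_some hlt, Finset.mem_Icc] at hx hy hz
    rw [sbtw_iff_lt] at hxyz ⊢
    omega
  · have hcard := ncard_domSet_gamma_le (n := n) hlt
    rw [hinj.ncard_im]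
    omega

end Gamma

/-! ### Factorizations -/

section Factorization

variable {α : PTrans} {e v c : ℕ}

theorem ncard_domSet_le_of_mem_IORDr (hα : α ∈ IORDr n r) : (domSet α).ncard ≤ r := by
  obtain ⟨-, hinj, -, hcard⟩ := mem_IORDr_iff.mp hα
  exact hinj.ncard_im ▸ hcard

theorem partialId_domSet_mem_IORDr (hα : α ∈ IORDr n r) : partialId (domSet α) ∈ IORDr n r :=
  partialId_mem_IORDr (mem_IORDr_iff.mp hα).1.domSet_subset (ncard_domSet_le_of_mem_IORDr hα)

theorem Undecomposable.eq_of_extends (hund : Undecomposable (IORDr n r) α) (hα : α ∈ IORDr n r)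
    (hne : α ≠ partialId (domSet α)) (hg : g ∈ IORDr n r)
    (hext : ∀ ⦃x y⦄, α x = some y → g x = some y) : α = g :=
  (hund _ (partialId_domSet_mem_IORDr hα) _ hg
    (partialId_domSet_mul_of_extends hext).symm).resolve_left hne

/-- First move `e` down to the free point `c`, then apply `α` with `e` renamed to `c`. -/
theorem Undecomposable.eq_moveMap_domSet (hund : Undecomposable (IORDr n r) α)
    (hα : α ∈ IORDr n r) (hev : α e = some v) (hvc : v ≤ c) (hce : c < e) (hc : c ∉ domSet α)
    (hcyc : PreservesCyc (moveMap (domSet α \ {e}) e c)) :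
    α = moveMap (domSet α \ {e}) e c := by
  obtain ⟨hdecr, hinj, hor, hcard⟩ := mem_IORDr_iff.mp hα
  have he := mem_domSet_of_eq_some hev
  have heZ : e ∉ domSet α \ {e} := fun h => h.2 rfl
  have hcZ : c ∉ domSet α \ {e} := fun h => hc h.1
  have hfactor : moveMap (domSet α \ {e}) e c * (moveMap (domSet α \ {e}) c e * α) = α := by
    rw [← mul_assoc, moveMap_mul_moveMap_symm heZ hcZ, Set.insert_sdiff_self_of_mem he]
    exact partialId_domSet_mul_of_extends fun _ _ => id
  have hdomZ : (domSet α \ {e}).ncard + 1 ≤ r :=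
    (Set.ncard_sdiff_singleton_add_one he hdecr.finite_domSet).trans_le
      (ncard_domSet_le_of_mem_IORDr hα)
  have hmove : moveMap (domSet α \ {e}) e c ∈ IORDr n r :=
    moveMap_mem_IORDr (Set.sdiff_subset.trans hdecr.domSet_subset) ((hdecr hev).1.trans hvc) hce.le
      (hdecr hev).2.2 hcZ hcyc hdomZ
  have hrenamed : moveMap (domSet α \ {e}) c e * α ∈ IORDr n r := by
    refine mem_IORDr_iff.mpr ⟨?_, (inj_moveMap heZ).mul hinj, preservesCyc_or_reversesCyc_mul
      (Or.inl (hcyc.moveMap_symm heZ hcZ)) hor,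
      (Set.ncard_le_ncard im_mul_subset hdecr.finite_im).trans hcard⟩
    intro x z hxz
    obtain ⟨y, hxy, hyz⟩ := mul_eq_some.mp hxz
    rcases moveMap_eq_some.mp hxy with ⟨-, rfl⟩ | ⟨-, rfl, rfl⟩
    · exact hdecr hyz
    · obtain rfl : v = z := Option.some_injective _ (hev.symm.trans hyz)
      exact ⟨(hdecr hev).1, hvc, hce.le.trans (hdecr hev).2.2⟩
  refine (hund _ hmove _ hrenamed hfactor.symm).resolve_right fun hα' => ?_
  have hmem := domSet_mul_subset ((congrArg (e ∈ domSet ·) hα').mp he)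
  rw [domSet_moveMap] at hmem
  exact hmem.elim (ne_of_gt hce) heZ

/-- First apply `α` with the value `v` raised to the free point `c`, then move `c` down to `v`. -/
theorem Undecomposable.eq_moveMap_im (hund : Undecomposable (IORDr n r) α)
    (hα : α ∈ IORDr n r) (hev : α e = some v) (hvc : v < c) (hce : c ≤ e) (hc : c ∉ im α)
    (hcyc : PreservesCyc (moveMap (im α \ {v}) c v)) :
    α = moveMap (im α \ {v}) c v := by
  obtain ⟨hdecr, hinj, hor, hcard⟩ := mem_IORDr_iff.mp hα
  have hv : v ∈ im α := ⟨e, hev⟩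
  have hvZ : v ∉ im α \ {v} := fun h => h.2 rfl
  have hcZ : c ∉ im α \ {v} := fun h => hc h.1
  have hfactor : α * moveMap (im α \ {v}) v c * moveMap (im α \ {v}) c v = α := by
    rw [mul_assoc, moveMap_mul_moveMap_symm hvZ hcZ, Set.insert_sdiff_self_of_mem hv,
      mul_partialId_im]
  have hmove : moveMap (im α \ {v}) c v ∈ IORDr n r :=
    moveMap_mem_IORDr (Set.sdiff_subset.trans hdecr.im_subset) (hdecr hev).1 hvc.le
      (hce.trans (hdecr hev).2.2) hvZ hcyc
      ((Set.ncard_sdiff_singleton_add_one hv hdecr.finite_im).trans_le hcard)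
  have hinj' : Inj (α * moveMap (im α \ {v}) v c) := hinj.mul (inj_moveMap hcZ)
  have hraised : α * moveMap (im α \ {v}) v c ∈ IORDr n r := by
    refine mem_IORDr_iff.mpr ⟨?_, hinj', preservesCyc_or_reversesCyc_mul hor
      (Or.inl (hcyc.moveMap_symm hcZ hvZ)), ?_⟩
    · intro x z hxz
      obtain ⟨y, hxy, hyz⟩ := mul_eq_some.mp hxz
      rcases moveMap_eq_some.mp hyz with ⟨-, rfl⟩ | ⟨-, rfl, rfl⟩
      · exact hdecr hxy
      · obtain rfl := hinj x e y hxy hev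
        exact ⟨(hdecr hev).1.trans hvc.le, hce, (hdecr hev).2.2⟩
    · rw [hinj'.ncard_im]
      exact (Set.ncard_le_ncard domSet_mul_subset hdecr.finite_domSet).trans
        (ncard_domSet_le_of_mem_IORDr hα)
  refine (hund _ hraised _ hmove hfactor.symm).resolve_left fun hα' => ?_
  have hec : (α * moveMap (im α \ {v}) v c) e = some c :=
    mul_eq_some.mpr ⟨v, hev, moveMap_eq_some.mpr (Or.inr ⟨hvZ, rfl, rfl⟩)⟩
  rw [← hα', hev] at hec
  exact hvc.ne (Option.some_injective _ hec)

theorem Undecomposable.eq_deltaMap_of_pred_notMem (hund : Undecomposable (IORDr n r) α)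
    (hα : α ∈ IORDr n r) (hev : α e = some v) (hve : v < e) (hpred : e - 1 ∉ domSet α) :
    α = deltaMap e (domSet α \ {e}) :=
  hund.eq_moveMap_domSet hα hev (by omega) (by omega) hpred
    (preservesCyc_moveMap_pred (fun h => h.2 rfl) fun h => hpred h.1)

theorem Undecomposable.eq_deltaMap_of_succ_notMem (hund : Undecomposable (IORDr n r) α)
    (hα : α ∈ IORDr n r) (hev : α e = some v) (hve : v < e) (hsucc : v + 1 ∉ im α) :
    α = deltaMap (v + 1) (im α \ {v}) :=
  hund.eq_moveMap_im hα hev v.lt_succ_self hve hsucc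
    (preservesCyc_moveMap_pred (fun h => hsucc h.1) fun h => h.2 rfl)

theorem Undecomposable.eq_moveMap_of_lt_min (hund : Undecomposable (IORDr n r) α)
    (hα : α ∈ IORDr n r) {b : ℕ} (hb : IsLeast (domSet α) b) (he : IsGreatest (domSet α) e)
    (hev : α e = some v) (hvb : v < b) : α = moveMap (domSet α \ {e}) e (b - 1) := by
  have hlt : ∀ z ∈ domSet α, b - 1 < z := fun z hz => by
    have := hb.2 hz
    omega
  exact hund.eq_moveMap_domSet hα hev (by omega) (hlt e he.1) (fun h => (hlt _ h).false)
    (preservesCyc_moveMap_of_forall_lt (fun z hz => hlt z hz.1) fun z hz =>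
      (he.2 hz.1).lt_of_ne hz.2)

theorem Undecomposable.moveMap_insert_notMem {Z : Set ℕ} {a b : ℕ}
    (hund : Undecomposable (IORDr n r) (moveMap Z a b)) (hmem : moveMap Z a b ∈ IORDr n r)
    (ha : a ∉ Z) (hba : b ≠ a) (hc : c ∉ Z) (hca : c ≠ a) :
    moveMap (insert c Z) a b ∉ IORDr n r := by
  intro hins
  have hab : moveMap Z a b a = some b := moveMap_eq_some.mpr (Or.inr ⟨ha, rfl, rfl⟩)
  have hne : moveMap Z a b ≠ partialId (domSet (moveMap Z a b)) := fun h => by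
    rw [h, partialId_eq_some] at hab
    exact hba hab.2.symm
  have heq := hund.eq_of_extends hmem hne hins fun x y hxy => by
    rw [moveMap_eq_some] at hxy ⊢
    grind
  have hcdom : c ∈ domSet (moveMap Z a b) := by
    rw [heq, domSet_moveMap]
    exact Or.inr (Set.mem_insert c Z)
  rw [domSet_moveMap] at hcdom
  exact hcdom.elim hca hc

end Factorization

/-! ### Classification of the undecomposable elements -/

section Classification

variable {α : PTrans} {p : ℕ}

theorem exists_mem_Icc_notMem {s : Set ℕ} (hs : s.Finite) (hcard : s.ncard < n) :
    ∃ c ∈ Set.Icc 1 n, c ∉ s :=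
  Set.exists_mem_notMem_of_ncard_lt_ncard (by simpa using hcard) hs

theorem Undecomposable.mem_EIset (hund : Undecomposable (IORDr n r) α) (hα : α ∈ IORDr n r)
    (hr : r + 1 ≤ n) (hid : α = partialId (domSet α)) : α ∈ EIset n r := by
  have hdecr := (mem_IORDr_iff.mp hα).1
  have hle := ncard_domSet_le_of_mem_IORDr hα
  refine ⟨domSet α, hdecr.domSet_subset, hle.antisymm (not_lt.mp fun hlt => ?_), hid⟩
  have hins : ∀ c, (insert c (domSet α)).ncard ≤ (domSet α).ncard + 1 :=
    fun c => Set.ncard_insert_le c _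
  obtain ⟨a, haX, ha⟩ := exists_mem_Icc_notMem (n := n) hdecr.finite_domSet (by omega)
  obtain ⟨b, hbX, hb⟩ := exists_mem_Icc_notMem (n := n) (hdecr.finite_domSet.insert a)
    ((hins a).trans_lt (by omega))
  have hmem : ∀ c ∈ Set.Icc 1 n, partialId (insert c (domSet α)) ∈ IORDr n r := fun c hc =>
    partialId_mem_IORDr (Set.insert_subset hc hdecr.domSet_subset) ((hins c).trans hlt)
  have hne : ∀ c ∉ domSet α, α ≠ partialId (insert c (domSet α)) := fun c hc h => by
    have hdom := congrArg domSet h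
    rw [domSet_partialId] at hdom
    exact hc (hdom ▸ Set.mem_insert c _)
  have hinter : insert a (domSet α) ∩ insert b (domSet α) = domSet α := by
    ext x
    simp only [Set.mem_inter_iff, Set.mem_insert_iff] at hb ⊢
    grind
  have hfactor : α = partialId (insert a (domSet α)) * partialId (insert b (domSet α)) := by
    rw [partialId_mul_partialId, hinter]
    exact hid
  rcases hund _ (hmem a haX) _ (hmem b hbX) hfactor with h | h
  · exact hne a ha h
  · exact hne b (fun h => hb (Set.mem_insert_of_mem a h)) h

theorem Undecomposable.deltaMap_mem_FIset {a : ℕ} {Y : Set ℕ}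
    (hund : Undecomposable (IORDr n r) (deltaMap a Y)) (hmem : deltaMap a Y ∈ IORDr n r)
    (hr : r + 1 ≤ n) (ha : 2 ≤ a) (han : a ≤ n) (hY : Y ⊆ Set.Icc 1 n \ {a - 1, a}) :
    deltaMap a Y ∈ FIset n r := by
  have haY : a ∉ Y := fun h => (hY h).2 (Or.inr rfl)
  have hfin : Y.Finite := (Set.finite_Icc 1 n).subset (hY.trans Set.sdiff_subset)
  have hcard := ncard_domSet_le_of_mem_IORDr hmem
  rw [deltaMap_eq_moveMap, domSet_moveMap, Set.ncard_insert_of_notMem haY hfin] at hcard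
  refine ⟨a, Y, ha, han, hY, ?_, rfl⟩
  by_contra hne
  have hins : (insert a (insert (a - 1) Y)).ncard ≤ Y.ncard + 2 :=
    (Set.ncard_insert_le a _).trans (Nat.succ_le_succ (Set.ncard_insert_le (a - 1) Y))
  obtain ⟨c, hcX, hc⟩ :=
    exists_mem_Icc_notMem (n := n) ((hfin.insert (a - 1)).insert a) (by omega)
  simp only [Set.mem_insert_iff, not_or] at hc
  obtain ⟨hca, hcpred, hcY⟩ := hc
  have hcins : insert c Y ⊆ Set.Icc 1 n \ {a - 1, a} :=
    Set.insert_subset ⟨hcX, fun h => h.elim hcpred hca⟩ hY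
  have := Set.ncard_insert_le c Y
  exact hund.moveMap_insert_notMem hmem haY (by omega) hcY hca
    (deltaMap_mem_IORDr ha han hcins (by omega))

/-- No point `e` moved by `f` can be lowered, nor its value raised, by one without colliding with
the domain or the image of `f`. -/
def Tight (f : PTrans) : Prop :=
  ∀ ⦃e v⦄, f e = some v → v ≠ e → e - 1 ∈ domSet f ∧ v + 1 ∈ im f

theorem Undecomposable.mem_FIset_or_tight (hund : Undecomposable (IORDr n r) α)
    (hα : α ∈ IORDr n r) (hr : r + 1 ≤ n) : α ∈ FIset n r ∨ Tight α := by
  have hdecr := (mem_IORDr_iff.mp hα).1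
  refine or_iff_not_imp_right.mpr fun htight => ?_
  simp only [Tight, not_forall, not_and_or] at htight
  obtain ⟨e, v, hev, hne, hfree⟩ := htight
  obtain ⟨hv, hve, hen⟩ := hdecr hev
  rcases hfree with hpred | hsucc
  · have heq := hund.eq_deltaMap_of_pred_notMem hα hev (by omega) hpred
    rw [heq] at hund hα ⊢
    refine hund.deltaMap_mem_FIset hα hr (by omega) hen fun z hz => ⟨hdecr.domSet_subset hz.1, ?_⟩
    rintro (rfl | h)
    exacts [hpred hz.1, hz.2 h]
  · have heq := hund.eq_deltaMap_of_succ_notMem hα hev (by omega) hsucc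
    rw [heq] at hund hα ⊢
    refine hund.deltaMap_mem_FIset hα hr (by omega) (by omega) fun z hz =>
      ⟨hdecr.im_subset hz.1, ?_⟩
    rintro (h | rfl)
    exacts [hz.2 h, hsucc hz.1]

theorem Tight.min_fixed (ht : Tight f) (hdecr : DecrOn n f) (hp : IsLeast (domSet f) p) :
    f p = some p := by
  obtain ⟨v, hv⟩ := mem_domSet.mp hp.1
  have hv1 := hdecr hv
  obtain rfl : v = p := by
    by_contra hne
    have := hp.2 (ht hv hne).1
    omega
  exact hv

theorem DecrOn.exists_isLeast_isGreatest (hdecr : DecrOn n f) (hne : (domSet f).Nonempty) :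
    ∃ b e, IsLeast (domSet f) b ∧ IsGreatest (domSet f) e :=
  ⟨_, _, ⟨Nat.sInf_mem hne, fun _ => Nat.sInf_le⟩,
    ⟨Nat.sSup_mem hne hdecr.finite_domSet.bddAbove,
      fun _ => le_csSup hdecr.finite_domSet.bddAbove⟩⟩

/-! ### Tight orientation-preserving maps -/

theorem Tight.eq_of_min_le (ht : Tight f) (hdecr : DecrOn n f) (hinj : Inj f)
    (hcyc : PreservesCyc f) (hp : IsLeast (domSet f) p) {z u : ℕ} (hz : f z = some u)
    (hpu : p ≤ u) : u = z := by
  have hfp := ht.min_fixed hdecr hp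
  induction z using Nat.strong_induction_on generalizing u with
  | _ z ih =>
    by_contra hne
    have huz := (hdecr hz).2.1
    have hpu' : p ≠ u := by
      rintro rfl
      exact hne (hinj p z p hfp hz)
    obtain ⟨w, hw⟩ := mem_domSet.mp (ht hz hne).1
    have hpwu : sbtw p w u := hcyc hfp hw hz (Or.inl ⟨by omega, by omega⟩)
    rw [sbtw_iff_lt] at hpwu
    have := ih (z - 1) (by omega) hw (by omega)
    omega

theorem Tight.apply_max_lt_min (ht : Tight f) (hdecr : DecrOn n f) (hinj : Inj f)
    (hcyc : PreservesCyc f) {b e v : ℕ} (hb : IsLeast (domSet f) b)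
    (he : IsGreatest (domSet f) e) (hev : f e = some v) (hne : f ≠ partialId (domSet f)) :
    v < b := by
  obtain ⟨z, u, hz, huz⟩ : ∃ z u, f z = some u ∧ z ≠ u := by
    by_contra! hfix
    exact hne (eq_partialId_domSet hfix)
  have hfb := ht.min_fixed hdecr hb
  have hub : u < b := by
    by_contra hbu
    exact huz (ht.eq_of_min_le hdecr hinj hcyc hb hz (not_lt.mp hbu)).symm
  have hze := he.2 (mem_domSet_of_eq_some hz)
  have hbz := hb.2 (mem_domSet_of_eq_some hz)
  rcases hze.eq_or_lt with rfl | hze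
  · rw [hev] at hz
    exact (Option.some_injective _ hz).trans_lt hub
  · have hbz' : b ≠ z := by
      rintro rfl
      rw [hfb] at hz
      exact huz (Option.some_injective _ hz)
    have hbuv : sbtw b u v := hcyc hfb hz hev (Or.inl ⟨by omega, hze⟩)
    rw [sbtw_iff_lt] at hbuv
    omega

theorem zetaMap_insert {Z : Set ℕ} {c : ℕ} (hbdd : BddAbove Z) (hne : Z.Nonempty)
    (hinf : sInf Z ≤ c) (hsup : c ≤ sSup Z) :
    zetaMap (insert c Z) = moveMap (insert c Z) (sSup Z + 1) (sInf Z - 1) := by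
  rw [zetaMap_eq_moveMap, csSup_insert hbdd hne, sup_eq_right.mpr hsup,
    csInf_insert (OrderBot.bddBelow Z) hne, inf_eq_right.mpr hinf]

theorem Undecomposable.zetaMap_mem {Z : Set ℕ} (hund : Undecomposable (IORDr n r) (zetaMap Z))
    (hmem : zetaMap Z ∈ IORDr n r) (hZ : Z ⊆ Set.Icc 1 n \ {1, n}) (hne : Z.Nonempty) :
    zetaMap Z ∈ GIset n r ∪ ⋃ k ∈ Set.Icc 2 (r - 1), GIcset n k := by
  have hfin : Z.Finite := (Set.finite_Icc 1 n).subset (hZ.trans Set.sdiff_subset)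
  have hle : ∀ z ∈ Z, sInf Z ≤ z ∧ z ≤ sSup Z := fun z hz =>
    ⟨Nat.sInf_le hz, le_csSup hfin.bddAbove hz⟩
  have hmaxZ : sSup Z + 1 ∉ Z := fun h => (hle _ h).2.not_gt (Nat.lt_succ_self _)
  have hcard := ncard_domSet_le_of_mem_IORDr hmem
  rw [zetaMap_eq_moveMap, domSet_moveMap, Set.ncard_insert_of_notMem hmaxZ hfin] at hcard
  have hpos := (Set.ncard_pos hfin).mpr hne
  rcases hcard.eq_or_lt with hcard | hcard
  · exact Or.inl ⟨Z, hZ, by omega, rfl⟩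
  refine Or.inr (Set.mem_biUnion (x := Z.ncard + 1) ⟨by omega, by omega⟩
    ⟨Z, hZ, rfl, ⟨fun x hx y hy c ⟨hxc, hcy⟩ => ?_⟩, rfl⟩)
  by_contra hc
  have hxc' := (hle x hx).1.trans hxc
  have hcy' := hcy.trans (hle y hy).2
  have hcZ : insert c Z ⊆ Set.Icc 1 n \ {1, n} := by
    refine Set.insert_subset ?_ hZ
    have hxn := hZ hx
    have hyn := hZ hy
    simp only [Set.mem_sdiff, Set.mem_Icc, Set.mem_insert_iff, Set.mem_singleton_iff] at hxn hyn ⊢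
    omega
  refine hund.moveMap_insert_notMem hmem hmaxZ (by omega) hc (by omega) ?_
  rw [← zetaMap_insert hfin.bddAbove hne hxc' hcy']
  exact zetaMap_mem_IORDr hcZ (Set.insert_nonempty c Z)
    ((Nat.succ_le_succ (Set.ncard_insert_le c Z)).trans hcard)

theorem Undecomposable.mem_of_preservesCyc (hund : Undecomposable (IORDr n r) α)
    (hα : α ∈ IORDr n r) (ht : Tight α) (hcyc : PreservesCyc α)
    (hid : α ≠ partialId (domSet α)) :
    α ∈ GIset n r ∪ ⋃ k ∈ Set.Icc 2 (r - 1), GIcset n k := by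
  obtain ⟨hdecr, hinj, -, -⟩ := mem_IORDr_iff.mp hα
  have hne : (domSet α).Nonempty := by
    by_contra hempty
    refine hid (eq_partialId_domSet fun x y hxy => ?_)
    exact absurd ⟨x, mem_domSet_of_eq_some hxy⟩ hempty
  obtain ⟨b, e, hb, he⟩ := hdecr.exists_isLeast_isGreatest hne
  obtain ⟨v, hev⟩ := mem_domSet.mp he.1
  have hvb := ht.apply_max_lt_min hdecr hinj hcyc hb he hev hid
  have heq := hund.eq_moveMap_of_lt_min hα hb he hev hvb
  have hv := hdecr hev
  have hbe : b ≠ e := by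
    rintro rfl
    exact hvb.ne (Option.some_injective _ (hev.symm.trans (ht.min_fixed hdecr hb)))
  have hlt : ∀ z ∈ domSet α \ {e}, z < e := fun z hz => (he.2 hz.1).lt_of_ne hz.2
  have hmin : IsLeast (domSet α \ {e}) b := ⟨⟨hb.1, hbe⟩, fun z hz => hb.2 hz.1⟩
  have hble := hb.2 he.1
  have hmax : IsGreatest (domSet α \ {e}) (e - 1) :=
    ⟨⟨(ht hev (by omega)).1, (show e - 1 ≠ e by omega)⟩,
      fun z hz => Nat.le_sub_one_of_lt (hlt z hz)⟩
  have hζ : α = zetaMap (domSet α \ {e}) := by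
    rw [zetaMap_eq_moveMap, hmin.csInf_eq, hmax.csSup_eq, Nat.sub_add_cancel (by omega)]
    exact heq
  rw [hζ] at hund hα ⊢
  refine hund.zetaMap_mem hα (fun z hz => ⟨hdecr.domSet_subset hz.1, ?_⟩) hmin.nonempty
  have := hlt z hz
  have := hmin.2 hz
  rw [Set.mem_insert_iff, Set.mem_singleton_iff]
  omega

/-! ### Tight orientation-reversing maps -/

theorem restrict_eq_some {Y : Set ℕ} {x y : ℕ} :
    restrict f Y x = some y ↔ x ∈ Y ∧ f x = some y := by
  rw [restrict]
  split_ifs with hx <;> simp [hx]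

theorem domSet_restrict {Y : Set ℕ} : domSet (restrict f Y) = domSet f ∩ Y := by
  ext x
  simp [mem_domSet, restrict_eq_some, and_comm]

theorem DecrOn.restrict (hdecr : DecrOn n f) (Y : Set ℕ) : DecrOn n (restrict f Y) :=
  fun _ _ hxy => hdecr (restrict_eq_some.mp hxy).2

theorem Inj.restrict (hinj : Inj f) (Y : Set ℕ) : Inj (restrict f Y) :=
  fun x y z hx hy => hinj x y z (restrict_eq_some.mp hx).2 (restrict_eq_some.mp hy).2

/-- Tightness and monotonicity force `f` to go up by exactly one from `z` to `z - 1`, so that `f` is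
the reflection in its least domain point. -/
theorem Tight.add_eq_two_mul_min (ht : Tight f) (hdecr : DecrOn n f) (hinj : Inj f)
    (hrev : OrderRev f) (hp : IsLeast (domSet f) p) {z u : ℕ} (hz : f z = some u) :
    u + z = 2 * p := by
  have hfp := ht.min_fixed hdecr hp
  induction z using Nat.strong_induction_on generalizing u with
  | _ z ih =>
    have hpz := hp.2 (mem_domSet_of_eq_some hz)
    rcases hpz.eq_or_lt with rfl | hpz
    · rw [hfp] at hz
      have := Option.some_injective _ hz
      omega
    have hup : u ≤ p := hrev p z p u hfp hz hpz.le
    obtain ⟨hpred, y, hy⟩ := ht hz (by omega)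
    obtain ⟨w, hw⟩ := mem_domSet.mp hpred
    have hyz : y < z := by
      by_contra hzy
      have := hrev z y u (u + 1) hz hy (not_lt.mp hzy)
      omega
    have hwu : w ≤ u + 1 := hrev y (z - 1) (u + 1) w hy hw (by omega)
    have huw : u ≤ w := hrev (z - 1) z w u hw hz (by omega)
    have hne : u ≠ w := by
      rintro rfl
      have := hinj (z - 1) z u hw hz
      omega
    have := ih (z - 1) (by omega) hw
    omega

/-- The points whose value under `f` is at most `p`, used to cut `f` into its two decreasing runs.
It also contains every point off the domain of `f`, where `val f` is `0`. -/
def lowBlock (f : PTrans) (p : ℕ) : Set ℕ := {z | val f z ≤ p}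

theorem mem_lowBlock {z u : ℕ} (hz : f z = some u) : z ∈ lowBlock f p ↔ u ≤ p := by
  rw [lowBlock, Set.mem_ofPred_eq, val_of_eq_some hz]

section Blocks

variable (hrev : ReversesCyc f) (hinj : Inj f) (hp : IsLeast (domSet f) p) (hfp : f p = some p)

include hrev hinj hp hfp

theorem ReversesCyc.lt_of_lt {y z u v : ℕ} (hy : f y = some u) (hz : f z = some v) (hyz : y < z) :
    v < u ∧ u ≤ p ∨ u ≤ p ∧ p < v ∨ p < v ∧ v < u := by
  have hpy := hp.2 (mem_domSet_of_eq_some hy)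
  rcases hpy.eq_or_lt with rfl | hpy
  · obtain rfl : p = u := Option.some_injective _ (hfp.symm.trans hy)
    have hne : v ≠ p := by
      rintro rfl
      exact hyz.ne (hinj _ _ _ hfp hz)
    omega
  · have hcyc : sbtw v u p := hrev hfp hy hz (Or.inl ⟨hpy, hyz⟩)
    rw [sbtw_iff_lt] at hcyc
    omega

theorem ReversesCyc.orderRev_restrict_lowBlock : OrderRev (restrict f (lowBlock f p)) := by
  intro y z u v hy hz hyz
  obtain ⟨hylow, hy⟩ := restrict_eq_some.mp hy
  obtain ⟨hzlow, hz⟩ := restrict_eq_some.mp hz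
  rw [mem_lowBlock hy] at hylow
  rw [mem_lowBlock hz] at hzlow
  rcases hyz.eq_or_lt with rfl | hyz
  · exact (Option.some_injective _ (hz.symm.trans hy)).le
  · have := hrev.lt_of_lt hinj hp hfp hy hz hyz
    omega

theorem ReversesCyc.orderRev_restrict_compl_lowBlock :
    OrderRev (restrict f (lowBlock f p)ᶜ) := by
  intro y z u v hy hz hyz
  obtain ⟨hyhigh, hy⟩ := restrict_eq_some.mp hy
  obtain ⟨hzhigh, hz⟩ := restrict_eq_some.mp hz
  rw [Set.mem_compl_iff, mem_lowBlock hy] at hyhigh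
  rcases hyz.eq_or_lt with rfl | hyz
  · exact (Option.some_injective _ (hz.symm.trans hy)).le
  · have := hrev.lt_of_lt hinj hp hfp hy hz hyz
    omega

theorem Tight.restrict_lowBlock (ht : Tight f) : Tight (restrict f (lowBlock f p)) := by
  intro e v hres hne
  obtain ⟨hlow, hev⟩ := restrict_eq_some.mp hres
  rw [mem_lowBlock hev] at hlow
  obtain ⟨hpred, y, hy⟩ := ht hev hne
  obtain ⟨w, hw⟩ := mem_domSet.mp hpred
  have hep : e ≠ p := by
    intro h
    exact hne (Option.some_injective _ (hev.symm.trans (h ▸ hfp)))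
  have hpe := hp.2 (mem_domSet_of_eq_some hev)
  have hwlow := hrev.lt_of_lt hinj hp hfp hw hev (by omega)
  refine ⟨mem_domSet_of_eq_some (restrict_eq_some.mpr ⟨(mem_lowBlock hw).mpr ?_, hw⟩), y,
    restrict_eq_some.mpr ⟨(mem_lowBlock hy).mpr ?_, hy⟩⟩ <;> omega

theorem Tight.restrict_compl_lowBlock (ht : Tight f) : Tight (restrict f (lowBlock f p)ᶜ) := by
  intro e v hev hne
  obtain ⟨hhigh, hev⟩ := restrict_eq_some.mp hev
  rw [Set.mem_compl_iff, mem_lowBlock hev] at hhigh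
  obtain ⟨hpred, y, hy⟩ := ht hev hne
  obtain ⟨w, hw⟩ := mem_domSet.mp hpred
  have hye : y < e := by
    rcases lt_trichotomy y e with h | rfl | h
    · exact h
    · have := Option.some_injective _ (hev.symm.trans hy)
      omega
    · have := hrev.lt_of_lt hinj hp hfp hev hy h
      omega
  have hwhigh : p < w := by
    rcases (Nat.le_sub_one_of_lt hye).eq_or_lt with rfl | h
    · have := Option.some_injective _ (hw.symm.trans hy)
      omega
    · have := hrev.lt_of_lt hinj hp hfp hy hw h
      omega
  exact ⟨mem_domSet_of_eq_some (restrict_eq_some.mpr ⟨(mem_lowBlock hw).not.mpr hwhigh.not_ge, hw⟩),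
    y, restrict_eq_some.mpr ⟨(mem_lowBlock hy).not.mpr (by omega), hy⟩⟩

end Blocks

theorem Tight.add_eq_two_mul_of_reversesCyc (ht : Tight f) (hdecr : DecrOn n f) (hinj : Inj f)
    (hrev : ReversesCyc f) {p q : ℕ} (hp : IsLeast (domSet f) p)
    (hq : IsLeast (domSet f \ lowBlock f p) q) {z u : ℕ} (hz : f z = some u) :
    u ≤ p ∧ z < q ∧ u + z = 2 * p ∨ p < u ∧ q ≤ z ∧ u + z = 2 * q := by
  have hfp := ht.min_fixed hdecr hp
  have hzdom := mem_domSet_of_eq_some hz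
  by_cases hlow : z ∈ lowBlock f p
  · have hup := (mem_lowBlock hz).mp hlow
    have hpl : IsLeast (domSet (restrict f (lowBlock f p))) p := by
      rw [domSet_restrict]
      exact ⟨⟨hp.1, (mem_lowBlock hfp).mpr le_rfl⟩, fun x hx => hp.2 hx.1⟩
    have hsum := (ht.restrict_lowBlock hrev hinj hp hfp).add_eq_two_mul_min (hdecr.restrict _)
      (hinj.restrict _) (hrev.orderRev_restrict_lowBlock hinj hp hfp) hpl
      (restrict_eq_some.mpr ⟨hlow, hz⟩)
    obtain ⟨w, hw⟩ := mem_domSet.mp hq.1.1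
    have hpw : ¬ w ≤ p := (mem_lowBlock hw).not.mp hq.1.2
    have hzq : z < q := by
      rcases lt_trichotomy z q with h | rfl | h
      · exact h
      · exact absurd hlow hq.1.2
      · have := hrev.lt_of_lt hinj hp hfp hw hz h
        omega
    exact Or.inl ⟨hup, hzq, hsum⟩
  · have hup := (mem_lowBlock hz).not.mp hlow
    have hqh : IsLeast (domSet (restrict f (lowBlock f p)ᶜ)) q := by
      rwa [domSet_restrict]
    have hsum := (ht.restrict_compl_lowBlock hrev hinj hp hfp).add_eq_two_mul_min
      (hdecr.restrict _) (hinj.restrict _) (hrev.orderRev_restrict_compl_lowBlock hinj hp hfp) hqh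
      (restrict_eq_some.mpr ⟨hlow, hz⟩)
    exact Or.inr ⟨not_le.mp hup, hq.2 ⟨hzdom, hlow⟩, hsum⟩

theorem Undecomposable.exists_notMem_lowBlock (hund : Undecomposable (IORDr n r) α)
    (hα : α ∈ IORDr n r) (hfp : α p = some p) (hp : IsLeast (domSet α) p)
    (hcyc : ¬ PreservesCyc α) : (domSet α \ lowBlock α p).Nonempty := by
  obtain ⟨hdecr, hinj, -, -⟩ := mem_IORDr_iff.mp hα
  by_contra hempty
  obtain ⟨b, e, -, he⟩ := hdecr.exists_isLeast_isGreatest hp.nonempty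
  obtain ⟨v, hev⟩ := mem_domSet.mp he.1
  have hvp : v ≤ p := by
    by_contra hv
    exact hempty ⟨e, he.1, (mem_lowBlock hev).not.mpr hv⟩
  rcases hvp.eq_or_lt with rfl | hvp
  · obtain rfl := hinj v e v hfp hev
    exact hcyc (preservesCyc_of_domSet_subset_pair (p := v) (q := v)
      fun x hx => Or.inl ((he.2 hx).antisymm (hp.2 hx)))
  · refine hcyc ?_
    rw [hund.eq_moveMap_of_lt_min hα hp he hev hvp]
    refine preservesCyc_moveMap_of_forall_lt (fun z hz => ?_) fun z hz => (he.2 hz.1).lt_of_ne hz.2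
    have := hp.2 hz.1
    omega

theorem preservesCyc_gamma_one (hn : 1 < n) : PreservesCyc (gamma n 1 n) := by
  refine preservesCyc_of_domSet_subset_pair (p := 1) (q := n) fun x hx => ?_
  have hval := eq_some_val hx
  rw [gamma_eq_some hn, Finset.mem_Icc, Finset.mem_Icc] at hval
  rw [Set.mem_insert_iff, Set.mem_singleton_iff]
  omega

theorem Undecomposable.mem_Gset (hund : Undecomposable (IORDr n r) α) (hα : α ∈ IORDr n r)
    (hr : n - n / 3 ≤ r) (ht : Tight α) (hrev : ReversesCyc α) (hcyc : ¬ PreservesCyc α) :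
    α ∈ Gset n := by
  obtain ⟨hdecr, hinj, -, -⟩ := mem_IORDr_iff.mp hα
  have hne : (domSet α).Nonempty := by
    by_contra hempty
    exact hcyc (preservesCyc_of_domSet_subset_pair (p := 0) (q := 0)
      fun x hx => absurd ⟨x, hx⟩ hempty)
  obtain ⟨p, -, hp, -⟩ := hdecr.exists_isLeast_isGreatest hne
  have hfp := ht.min_fixed hdecr hp
  have hhigh := hund.exists_notMem_lowBlock hα hfp hp hcyc
  obtain ⟨q, hq⟩ : ∃ q, IsLeast (domSet α \ lowBlock α p) q :=
    ⟨_, Nat.sInf_mem hhigh, fun _ => Nat.sInf_le⟩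
  have hsum : ∀ ⦃z u⦄, α z = some u →
      u ≤ p ∧ z < q ∧ u + z = 2 * p ∨ p < u ∧ q ≤ z ∧ u + z = 2 * q :=
    fun _ _ => ht.add_eq_two_mul_of_reversesCyc hdecr hinj hrev hp hq
  have hpq : p + 2 ≤ q := by
    by_contra hlt
    refine hcyc (preservesCyc_of_domSet_subset_pair (p := p) (q := q) fun z hz => ?_)
    have hpz := hp.2 hz
    have := hsum (eq_some_val hz)
    rw [Set.mem_insert_iff, Set.mem_singleton_iff]
    omega
  have hq1 := hdecr (eq_some_val hq.1.1)
  have hp1 := hdecr hfp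
  have hext : ∀ ⦃z u⦄, α z = some u → gamma n p q z = some u := by
    intro z u hz
    have hpz := hp.2 (mem_domSet_of_eq_some hz)
    have := hdecr hz
    have := hsum hz
    rw [gamma_eq_some (by omega), Finset.mem_Icc, Finset.mem_Icc]
    omega
  have hid : α ≠ partialId (domSet α) := fun h => hcyc (h ▸ preservesCyc_partialId)
  have heq := hund.eq_of_extends hα hid (gamma_mem_IORDr hr hp1.1 hpq hq1.2.2) hext
  refine ⟨⟨p, q, hp1.1, hpq, hq1.2.2, heq⟩, fun h => hcyc ?_⟩
  rw [Set.mem_singleton_iff.mp h]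
  exact preservesCyc_gamma_one (by omega)

/-! ### The maximal subsemigroups -/

theorem Undecomposable.mem_generators (hund : Undecomposable (IORDr n r) α) (hα : α ∈ IORDr n r)
    (hr : r + 1 ≤ n) (hr' : n - n / 3 ≤ r) :
    α ∈ EIset n r ∪ FIset n r ∪ GIset n r ∪ (⋃ k ∈ Set.Icc 2 (r - 1), GIcset n k) ∪ Gset n := by
  by_cases hid : α = partialId (domSet α)
  · exact Or.inl (Or.inl (Or.inl (Or.inl (hund.mem_EIset hα hr hid))))
  rcases hund.mem_FIset_or_tight hα hr with hδ | ht
  · exact Or.inl (Or.inl (Or.inl (Or.inr hδ)))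
  by_cases hcyc : PreservesCyc α
  · rcases hund.mem_of_preservesCyc hα ht hcyc hid with hζ | hζ
    · exact Or.inl (Or.inl (Or.inr hζ))
    · exact Or.inl (Or.inr hζ)
  · have hrev := (mem_IORDr_iff.mp hα).2.2.1.resolve_left hcyc
    exact Or.inr (hund.mem_Gset hα hr' ht hrev hcyc)

theorem mem_IORDr_of_mem_generators (hr : 2 ≤ r) (hr' : n - n / 3 ≤ r)
    (hα : α ∈ EIset n r ∪ FIset n r ∪ GIset n r ∪ (⋃ k ∈ Set.Icc 2 (r - 1), GIcset n k) ∪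
      Gset n) : α ∈ IORDr n r := by
  rcases hα with (((⟨Y, hY, hcard, rfl⟩ | ⟨a, Y, ha, han, hY, hcard, rfl⟩) |
    ⟨Z, hZ, hcard, rfl⟩) | hζ) | ⟨⟨p, q, hp, hpq, hq, rfl⟩, -⟩
  · exact partialId_mem_IORDr hY hcard.le
  · exact deltaMap_mem_IORDr ha han hY (by omega)
  · exact zetaMap_mem_IORDr hZ (Set.nonempty_of_ncard_ne_zero (by omega)) (by omega)
  · obtain ⟨k, ⟨hk, hkr⟩, Z, hZ, hcard, -, rfl⟩ := Set.mem_iUnion₂.mp hζ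
    exact zetaMap_mem_IORDr hZ (Set.nonempty_of_ncard_ne_zero (by omega)) (by omega)
  · exact gamma_mem_IORDr hr' hp hpq hq

end Classification

end OrientedPT

open OrientedPT in
/-- For `n ≥ 4` and `n − ⌊n/3⌋ ≤ r ≤ n−1`, a subsemigroup `S`
of `IORD(n,r)` is maximal iff `S = IORD(n,r) \ {α}` for some
`α ∈ EI_r ∪ FI_r ∪ GI_r ∪ (⋃_{k=2}^{r−1} GI_k^c) ∪ G_n`. -/
theorem maximal_subsemigroups_IORDr (n r : ℕ) (hn : 4 ≤ n)
    (hr1 : n - n / 3 ≤ r) (hr2 : r ≤ n - 1) (S : Set PTrans)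
    (hS : IsSubsemigroupOf S (IORDr n r)) :
    IsMaximalSubsemigroup (IORDr n r) S ↔
      ∃ α ∈ EIset n r ∪ FIset n r ∪ GIset n r ∪
          (⋃ k ∈ Set.Icc 2 (r - 1), GIcset n k) ∪ Gset n,
        S = IORDr n r \ {α} := by
  constructor
  · intro h
    obtain ⟨α, hα, hund, rfl⟩ := exists_undecomposable_of_isMaximalSubsemigroup h
    exact ⟨α, hund.mem_generators hα (by omega) hr1, rfl⟩
  · rintro ⟨α, hα, rfl⟩
    exact isMaximalSubsemigroup_sdiff_singleton
      (mem_IORDr_of_mem_generators (by omega) hr1 hα) hS
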